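/- Let 0 < r < ∞ and set L := η^3 ξ^{3h}. For any finite maximal antichain Γ ⊂ Ω there exists n_0 = n_0(Γ) such that for every n ≥ n_0 there exists a family of positive integers (n_σ)_{σ∈Γ} with Σ_{σ∈Γ} n_σ ≤ n and u_{n,r}(μ_h) ≥ (Lξ^r)^{-1} Σ_{σ∈Γ} μ_h(J_σ) ‖φ'_σ‖^r u_{n_σ,r}(μ_h). -/

import Mathlib

open MeasureTheory Filter Metric

noncomputable section

/-- A cookie-cutter system on `J = [0,1]`. -/
structure CookieCutter where
  N : ℕ
  hN : 2 ≤ N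
  Jsub : Fin N → Set ℝ
  f : ℝ → ℝ
  φ : Fin N → ℝ → ℝ
  c : ℝ
  γ : ℝ
  b : ℝ
  B : ℝ
  hJsub_sub : ∀ j, Jsub j ⊆ Set.Icc 0 1
  hJsub_interval : ∀ j, ∃ u v : ℝ, u ≤ v ∧ Jsub j = Set.Icc u v
  hJsub_disj : ∀ i j, i ≠ j → Disjoint (Jsub i) (Jsub j)
  hbij : ∀ j, Set.BijOn f (Jsub j) (Set.Icc 0 1)
  hφ_maps : ∀ j, ∀ x ∈ Set.Icc (0:ℝ) 1, φ j x ∈ Jsub j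
  hφ_rinv : ∀ j, ∀ x ∈ Set.Icc (0:ℝ) 1, f (φ j x) = x
  hφ_linv : ∀ j, ∀ x ∈ Jsub j, φ j (f x) = x
  hfdiff : ∀ j, ∀ x ∈ Jsub j, DifferentiableAt ℝ f x
  hφdiff : ∀ j, ∀ x ∈ Set.Icc (0:ℝ) 1, DifferentiableAt ℝ (φ j) x
  hc : 0 < c
  hγ : γ ∈ Set.Ioc (0:ℝ) 1
  hHolder : ∀ j, ∀ x ∈ Jsub j, ∀ y ∈ Jsub j, |deriv f x - deriv f y| ≤ c * |x - y| ^ γ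
  hb : IsGLB ((fun x => |deriv f x|) '' ⋃ j, Jsub j) b
  hB : IsLUB ((fun x => |deriv f x|) '' ⋃ j, Jsub j) B
  hb1 : 1 < b

namespace CookieCutter

variable (cc : CookieCutter)

/-- `φ_σ = φ_{σ_1} ∘ ⋯ ∘ φ_{σ_n}` for a word `σ`. -/
def wordMap : List (Fin cc.N) → ℝ → ℝ
  | [] => id
  | j :: rest => cc.φ j ∘ wordMap rest

/-- The basic interval `J_σ = φ_σ(J)`. -/
def Jc (σ : List (Fin cc.N)) : Set ℝ := cc.wordMap σ '' Set.Icc 0 1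

/-- The diameter `|J_σ|`. -/
def diamJ (σ : List (Fin cc.N)) : ℝ := Metric.diam (cc.Jc σ)

/-- `‖φ'_σ‖ = sup_{x ∈ J} |φ'_σ(x)|`. -/
def φnorm (σ : List (Fin cc.N)) : ℝ :=
  sSup ((fun x => |deriv (cc.wordMap σ) x|) '' Set.Icc 0 1)

/-- The distortion constant `ξ = exp (c / (b^γ − 1))`. -/
def xi : ℝ := Real.exp (cc.c / (cc.b ^ cc.γ - 1))

/-- The cookie-cutter set `E = ⋂_{n ≥ 1} ⋃_{σ ∈ Ω_n} J_σ`. -/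
def E : Set ℝ := ⋂ (n : ℕ) (_ : 1 ≤ n), ⋃ σ : Fin n → Fin cc.N, cc.Jc (List.ofFn σ)

/-- `η = ξ^{9h}`. -/
def eta (h : ℝ) : ℝ := cc.xi ^ ((9:ℝ) * h)

/-- `L = η³ ξ^{3h}`. -/
def Lconst (h : ℝ) : ℝ := (cc.eta h) ^ 3 * cc.xi ^ ((3:ℝ) * h)

/-- A Gibbs-like measure for the cookie-cutter system: a Borel probability measure
supported on `E` with `η⁻¹|J_σ|^h ≤ μ(J_σ) ≤ η|J_σ|^h` for every word `σ`. -/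
def IsGibbsLike (μ : Measure ℝ) (h : ℝ) : Prop :=
  IsProbabilityMeasure μ ∧ μ (cc.Eᶜ) = 0 ∧
    ∀ σ : List (Fin cc.N), σ ≠ [] →
      (cc.eta h)⁻¹ * cc.diamJ σ ^ h ≤ (μ (cc.Jc σ)).toReal ∧
      (μ (cc.Jc σ)).toReal ≤ cc.eta h * cc.diamJ σ ^ h

/-- A finite maximal antichain in `Ω`. -/
def IsFMA (Γ : Finset (List (Fin cc.N))) : Prop :=
  (∀ σ ∈ Γ, σ ≠ []) ∧
  (∀ ω : ℕ → Fin cc.N, ∃ k : ℕ, 1 ≤ k ∧ (List.ofFn fun i : Fin k => ω i) ∈ Γ) ∧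
  ∀ σ ∈ Γ, ∀ τ ∈ Γ, σ <+: τ → σ = τ

end CookieCutter

/-- The `n`-th quantization error of order `r`. -/
def Vnr (μ : Measure ℝ) (n : ℕ) (r : ℝ) : ℝ :=
  sInf ((fun α : Finset ℝ => ∫ x, Metric.infDist x (α : Set ℝ) ^ r ∂μ) ''
    {α : Finset ℝ | α.Nonempty ∧ α.card ≤ n})

/-- The auxiliary quantization error `u_{n,r}` with `U = (0,1)`. -/
def unr (μ : Measure ℝ) (n : ℕ) (r : ℝ) : ℝ :=
  sInf ((fun α : Finset ℝ =>
      ∫ x, Metric.infDist x ((α : Set ℝ) ∪ (Set.Ioo (0:ℝ) 1)ᶜ) ^ r ∂μ) ''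
    {α : Finset ℝ | α.card ≤ n})


namespace CookieCutter

variable (cc : CookieCutter)

lemma b_pos : 0 < cc.b := zero_lt_one.trans cc.hb1

lemma one_lt_b_rpow : 1 < cc.b ^ cc.γ := Real.one_lt_rpow cc.hb1 cc.hγ.1

lemma xi_pos : 0 < cc.xi := Real.exp_pos _

lemma one_le_xi : 1 ≤ cc.xi :=
  Real.one_le_exp (div_nonneg cc.hc.le (sub_nonneg.2 cc.one_lt_b_rpow.le))

lemma eta_pos (h : ℝ) : 0 < cc.eta h := Real.rpow_pos_of_pos cc.xi_pos _

lemma φ_mem_Icc (j : Fin cc.N) {x : ℝ} (hx : x ∈ Set.Icc (0 : ℝ) 1) :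
    cc.φ j x ∈ Set.Icc (0 : ℝ) 1 :=
  cc.hJsub_sub j (cc.hφ_maps j x hx)

lemma wordMap_mem_Icc (σ : List (Fin cc.N)) {x : ℝ} (hx : x ∈ Set.Icc (0 : ℝ) 1) :
    cc.wordMap σ x ∈ Set.Icc (0 : ℝ) 1 := by
  induction σ with
  | nil => exact hx
  | cons j σ ih => exact cc.φ_mem_Icc j ih

lemma wordMap_append (σ τ : List (Fin cc.N)) :
    cc.wordMap (σ ++ τ) = cc.wordMap σ ∘ cc.wordMap τ := by
  induction σ with
  | nil => rfl
  | cons j σ ih => simp [wordMap, ih, Function.comp_assoc]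

lemma wordMap_differentiableAt (σ : List (Fin cc.N)) {x : ℝ} (hx : x ∈ Set.Icc (0 : ℝ) 1) :
    DifferentiableAt ℝ (cc.wordMap σ) x := by
  induction σ with
  | nil => exact differentiableAt_id
  | cons j σ ih => exact (cc.hφdiff j _ (cc.wordMap_mem_Icc σ hx)).comp x ih

lemma wordMap_continuousOn (σ : List (Fin cc.N)) :
    ContinuousOn (cc.wordMap σ) (Set.Icc 0 1) := fun _ hx =>
  (cc.wordMap_differentiableAt σ hx).continuousAt.continuousWithinAt

lemma φ_injOn (j : Fin cc.N) : Set.InjOn (cc.φ j) (Set.Icc 0 1) := fun x hx y hy hxy => by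
  rw [← cc.hφ_rinv j x hx, ← cc.hφ_rinv j y hy, hxy]

lemma wordMap_injOn (σ : List (Fin cc.N)) : Set.InjOn (cc.wordMap σ) (Set.Icc 0 1) := by
  induction σ with
  | nil => exact Set.injOn_id _
  | cons j σ ih => exact (cc.φ_injOn j).comp ih fun x hx => cc.wordMap_mem_Icc σ hx

lemma b_le_abs_deriv_f (j : Fin cc.N) {x : ℝ} (hx : x ∈ cc.Jsub j) : cc.b ≤ |deriv cc.f x| :=
  cc.hb.1 ⟨x, Set.mem_iUnion.2 ⟨j, hx⟩, rfl⟩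

lemma deriv_φ (j : Fin cc.N) {x : ℝ} (hx : x ∈ Set.Icc (0 : ℝ) 1) :
    deriv (cc.φ j) x = (deriv cc.f (cc.φ j x))⁻¹ := by
  have h1 : HasDerivAt (cc.f ∘ cc.φ j) (deriv cc.f (cc.φ j x) * deriv (cc.φ j) x) x :=
    (cc.hfdiff j _ (cc.hφ_maps j x hx)).hasDerivAt.comp x (cc.hφdiff j x hx).hasDerivAt
  have h2 : HasDerivWithinAt (cc.f ∘ cc.φ j) 1 (Set.Icc 0 1) x :=
    (hasDerivWithinAt_id x _).congr (fun y hy => cc.hφ_rinv j y hy) (cc.hφ_rinv j x hx)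
  have h3 := (uniqueDiffOn_Icc zero_lt_one x hx).eq_deriv _ h1.hasDerivWithinAt h2
  exact eq_inv_of_mul_eq_one_right h3

lemma deriv_wordMap_cons (j : Fin cc.N) (σ : List (Fin cc.N)) {x : ℝ}
    (hx : x ∈ Set.Icc (0 : ℝ) 1) :
    deriv (cc.wordMap (j :: σ)) x =
      (deriv cc.f (cc.wordMap (j :: σ) x))⁻¹ * deriv (cc.wordMap σ) x := by
  have hσ := cc.wordMap_mem_Icc σ hx
  have := deriv_comp x (cc.hφdiff j _ hσ) (cc.wordMap_differentiableAt σ hx)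
  rw [cc.deriv_φ j hσ] at this
  exact this

lemma wordMap_cons_mem_Jsub (j : Fin cc.N) (σ : List (Fin cc.N)) {x : ℝ}
    (hx : x ∈ Set.Icc (0 : ℝ) 1) : cc.wordMap (j :: σ) x ∈ cc.Jsub j :=
  cc.hφ_maps j _ (cc.wordMap_mem_Icc σ hx)

lemma abs_deriv_wordMap_pos (σ : List (Fin cc.N)) {x : ℝ} (hx : x ∈ Set.Icc (0 : ℝ) 1) :
    0 < |deriv (cc.wordMap σ) x| := by
  induction σ with
  | nil => simp [wordMap]
  | cons j σ ih =>
    rw [cc.deriv_wordMap_cons j σ hx, abs_mul, abs_inv]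
    exact mul_pos (inv_pos.2 (cc.b_pos.trans_le
      (cc.b_le_abs_deriv_f j (cc.wordMap_cons_mem_Jsub j σ hx)))) ih

lemma abs_deriv_wordMap_le (σ : List (Fin cc.N)) {x : ℝ} (hx : x ∈ Set.Icc (0 : ℝ) 1) :
    |deriv (cc.wordMap σ) x| ≤ cc.b⁻¹ ^ σ.length := by
  induction σ with
  | nil => simp [wordMap]
  | cons j σ ih =>
    rw [cc.deriv_wordMap_cons j σ hx, abs_mul, abs_inv, List.length_cons, pow_succ']
    exact mul_le_mul (inv_anti₀ cc.b_pos
      (cc.b_le_abs_deriv_f j (cc.wordMap_cons_mem_Jsub j σ hx))) ih (abs_nonneg _)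
      (inv_nonneg.2 cc.b_pos.le)

lemma abs_wordMap_sub_le (σ : List (Fin cc.N)) {x y : ℝ} (hx : x ∈ Set.Icc (0 : ℝ) 1)
    (hy : y ∈ Set.Icc (0 : ℝ) 1) :
    |cc.wordMap σ x - cc.wordMap σ y| ≤ cc.b⁻¹ ^ σ.length := by
  have h1 := (convex_Icc (0 : ℝ) 1).norm_image_sub_le_of_norm_deriv_le
    (fun z hz => cc.wordMap_differentiableAt σ hz) (fun z hz => cc.abs_deriv_wordMap_le σ hz) hy hx
  have h2 : ‖x - y‖ ≤ 1 := by
    rw [Real.norm_eq_abs, abs_le]; constructor <;> linarith [hx.1, hx.2, hy.1, hy.2]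
  exact h1.trans (mul_le_of_le_one_right (pow_nonneg (inv_nonneg.2 cc.b_pos.le) _) h2)

/-- Distortion bound for words of a given length. -/
lemma abs_deriv_wordMap_le_exp_mul (σ : List (Fin cc.N)) {x y : ℝ}
    (hx : x ∈ Set.Icc (0 : ℝ) 1) (hy : y ∈ Set.Icc (0 : ℝ) 1) :
    |deriv (cc.wordMap σ) x| ≤
      Real.exp (cc.c * (1 - (cc.b ^ cc.γ)⁻¹ ^ σ.length) / (cc.b ^ cc.γ - 1)) *
        |deriv (cc.wordMap σ) y| := by
  have hp := cc.one_lt_b_rpow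
  induction σ with
  | nil => simp [wordMap]
  | cons j σ ih =>
    set u := cc.wordMap (j :: σ) x with hu
    set v := cc.wordMap (j :: σ) y with hv
    have huJ : u ∈ cc.Jsub j := cc.wordMap_cons_mem_Jsub j σ hx
    have hvJ : v ∈ cc.Jsub j := cc.wordMap_cons_mem_Jsub j σ hy
    have hbu := cc.b_le_abs_deriv_f j huJ
    have hbv := cc.b_le_abs_deriv_f j hvJ
    have hH := cc.hHolder j v hvJ u huJ
    have hdist : |v - u| ^ cc.γ ≤ (cc.b ^ cc.γ)⁻¹ ^ (σ.length + 1) := by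
      refine (Real.rpow_le_rpow (abs_nonneg _) (cc.abs_wordMap_sub_le (j :: σ) hy hx)
        cc.hγ.1.le).trans_eq ?_
      rw [List.length_cons, ← Real.rpow_pow_comm (inv_nonneg.2 cc.b_pos.le),
        Real.inv_rpow cc.b_pos.le]
    set Q := (cc.b ^ cc.γ)⁻¹ ^ (σ.length + 1)
    have hQ0 : 0 ≤ cc.c * Q := by have := cc.hc; positivity
    have h1 : |deriv cc.f v| ≤ Real.exp (cc.c * Q) * |deriv cc.f u| := by
      have h2 : |deriv cc.f v| ≤ |deriv cc.f u| + cc.c * Q := by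
        have := abs_sub_abs_le_abs_sub (deriv cc.f v) (deriv cc.f u)
        have := mul_le_mul_of_nonneg_left hdist cc.hc.le
        linarith
      have h3 := Real.add_one_le_exp (cc.c * Q)
      have h4 : 1 ≤ |deriv cc.f u| := cc.hb1.le.trans hbu
      nlinarith
    have h5 : |deriv cc.f u|⁻¹ ≤ Real.exp (cc.c * Q) * |deriv cc.f v|⁻¹ := by
      have hu0 := cc.b_pos.trans_le hbu
      have hv0 := cc.b_pos.trans_le hbv
      rw [← div_eq_mul_inv, le_div_iff₀ hv0, inv_mul_le_iff₀ hu0]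
      linarith
    rw [cc.deriv_wordMap_cons j σ hx, cc.deriv_wordMap_cons j σ hy, abs_mul, abs_mul, abs_inv,
      abs_inv, ← hu, ← hv, List.length_cons]
    have hexp : cc.c * (1 - Q) / (cc.b ^ cc.γ - 1) =
        cc.c * Q + cc.c * (1 - (cc.b ^ cc.γ)⁻¹ ^ σ.length) / (cc.b ^ cc.γ - 1) := by
      have hp1 : cc.b ^ cc.γ - 1 ≠ 0 := by linarith
      have hp0 : cc.b ^ cc.γ ≠ 0 := by linarith
      simp only [Q, pow_succ]
      field_simp
      ring
    rw [hexp, Real.exp_add]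
    calc _ ≤ (Real.exp (cc.c * Q) * |deriv cc.f v|⁻¹) * _ :=
          mul_le_mul h5 ih (abs_nonneg _) (by positivity)
      _ = _ := by ring

lemma abs_deriv_wordMap_le_xi_mul (σ : List (Fin cc.N)) {x y : ℝ}
    (hx : x ∈ Set.Icc (0 : ℝ) 1) (hy : y ∈ Set.Icc (0 : ℝ) 1) :
    |deriv (cc.wordMap σ) x| ≤ cc.xi * |deriv (cc.wordMap σ) y| := by
  refine (cc.abs_deriv_wordMap_le_exp_mul σ hx hy).trans
    (mul_le_mul_of_nonneg_right (Real.exp_le_exp.2 ?_) (abs_nonneg _))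
  have hp := cc.one_lt_b_rpow
  have hq : 0 ≤ (cc.b ^ cc.γ)⁻¹ ^ σ.length := by positivity
  refine div_le_div_of_nonneg_right ?_ (sub_nonneg.2 hp.le)
  exact mul_le_of_le_one_right cc.hc.le (by linarith)

lemma abs_deriv_wordMap_le_φnorm (σ : List (Fin cc.N)) {x : ℝ} (hx : x ∈ Set.Icc (0 : ℝ) 1) :
    |deriv (cc.wordMap σ) x| ≤ cc.φnorm σ := by
  refine le_csSup ⟨cc.b⁻¹ ^ σ.length, ?_⟩ ⟨x, hx, rfl⟩
  rintro _ ⟨y, hy, rfl⟩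
  exact cc.abs_deriv_wordMap_le σ hy

lemma φnorm_pos (σ : List (Fin cc.N)) : 0 < cc.φnorm σ :=
  (cc.abs_deriv_wordMap_pos σ (Set.left_mem_Icc.2 zero_le_one)).trans_le
    (cc.abs_deriv_wordMap_le_φnorm σ (Set.left_mem_Icc.2 zero_le_one))

lemma φnorm_le_xi_mul (σ : List (Fin cc.N)) {x : ℝ} (hx : x ∈ Set.Icc (0 : ℝ) 1) :
    cc.φnorm σ ≤ cc.xi * |deriv (cc.wordMap σ) x| := by
  refine csSup_le ((Set.nonempty_Icc.2 zero_le_one).image _) ?_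
  rintro _ ⟨y, hy, rfl⟩
  exact cc.abs_deriv_wordMap_le_xi_mul σ hy hx

lemma wordMap_sub_le_φnorm_mul (σ : List (Fin cc.N)) {x y : ℝ} (hx : x ∈ Set.Icc (0 : ℝ) 1)
    (hy : y ∈ Set.Icc (0 : ℝ) 1) :
    |cc.wordMap σ x - cc.wordMap σ y| ≤ cc.φnorm σ * |x - y| :=
  (convex_Icc (0 : ℝ) 1).norm_image_sub_le_of_norm_deriv_le
    (fun _ hz => cc.wordMap_differentiableAt σ hz)
    (fun _ hz => cc.abs_deriv_wordMap_le_φnorm σ hz) hy hx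

lemma φnorm_mul_le_wordMap_sub (σ : List (Fin cc.N)) {x y : ℝ} (hx : x ∈ Set.Icc (0 : ℝ) 1)
    (hy : y ∈ Set.Icc (0 : ℝ) 1) :
    cc.xi⁻¹ * cc.φnorm σ * |x - y| ≤ |cc.wordMap σ x - cc.wordMap σ y| := by
  wlog hxy : x < y generalizing x y
  · rcases (not_lt.1 hxy).eq_or_lt with rfl | hlt
    · simp
    · rw [abs_sub_comm x, abs_sub_comm (cc.wordMap σ x)]
      exact this hy hx hlt
  have hsub : Set.Icc x y ⊆ Set.Icc 0 1 := Set.Icc_subset_Icc hx.1 hy.2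
  obtain ⟨z, hz, hzd⟩ := exists_deriv_eq_slope (cc.wordMap σ) hxy
    ((cc.wordMap_continuousOn σ).mono hsub) fun z hz =>
      (cc.wordMap_differentiableAt σ
        (hsub (Set.Ioo_subset_Icc_self hz))).differentiableWithinAt
  have h1 := cc.φnorm_le_xi_mul σ (hsub (Set.Ioo_subset_Icc_self hz))
  have hyx : y - x ≠ 0 := (sub_pos.2 hxy).ne'
  have h2 : cc.wordMap σ y - cc.wordMap σ x = deriv (cc.wordMap σ) z * (y - x) := by
    rw [hzd, div_mul_cancel₀ _ hyx]
  rw [abs_sub_comm x, abs_sub_comm (cc.wordMap σ x), h2, abs_mul]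
  refine mul_le_mul_of_nonneg_right ?_ (abs_nonneg _)
  rwa [inv_mul_le_iff₀ cc.xi_pos]

lemma isCompact_Jc (σ : List (Fin cc.N)) : IsCompact (cc.Jc σ) :=
  isCompact_Icc.image_of_continuousOn (cc.wordMap_continuousOn σ)

lemma measurableSet_Jc (σ : List (Fin cc.N)) : MeasurableSet (cc.Jc σ) :=
  (cc.isCompact_Jc σ).isClosed.measurableSet

lemma Jc_subset_Icc (σ : List (Fin cc.N)) : cc.Jc σ ⊆ Set.Icc 0 1 := by
  rintro _ ⟨x, hx, rfl⟩
  exact cc.wordMap_mem_Icc σ hx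

lemma Jc_append (σ τ : List (Fin cc.N)) : cc.Jc (σ ++ τ) = cc.wordMap σ '' cc.Jc τ := by
  rw [Jc, wordMap_append, Set.image_comp, Jc]

lemma Jc_append_subset (σ τ : List (Fin cc.N)) : cc.Jc (σ ++ τ) ⊆ cc.Jc σ := by
  rw [Jc_append]
  exact Set.image_mono (cc.Jc_subset_Icc τ)

lemma diamJ_nonneg (σ : List (Fin cc.N)) : 0 ≤ cc.diamJ σ := Metric.diam_nonneg

lemma dist_le_diamJ (σ : List (Fin cc.N)) {x y : ℝ} (hx : x ∈ cc.Jc σ) (hy : y ∈ cc.Jc σ) :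
    |x - y| ≤ cc.diamJ σ :=
  Metric.dist_le_diam_of_mem (cc.isCompact_Jc σ).isBounded hx hy

lemma diamJ_le_pow (σ : List (Fin cc.N)) : cc.diamJ σ ≤ cc.b⁻¹ ^ σ.length := by
  refine Metric.diam_le_of_forall_dist_le (pow_nonneg (inv_nonneg.2 cc.b_pos.le) _) ?_
  rintro _ ⟨x, hx, rfl⟩ _ ⟨y, hy, rfl⟩
  exact cc.abs_wordMap_sub_le σ hx hy

lemma diamJ_le_φnorm (σ : List (Fin cc.N)) : cc.diamJ σ ≤ cc.φnorm σ := by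
  refine Metric.diam_le_of_forall_dist_le (cc.φnorm_pos σ).le ?_
  rintro _ ⟨x, hx, rfl⟩ _ ⟨y, hy, rfl⟩
  refine (cc.wordMap_sub_le_φnorm_mul σ hx hy).trans
    (mul_le_of_le_one_right (cc.φnorm_pos σ).le ?_)
  rw [abs_le]; constructor <;> linarith [hx.1, hx.2, hy.1, hy.2]

lemma diamJ_pos (σ : List (Fin cc.N)) : 0 < cc.diamJ σ := by
  have h0 : (0 : ℝ) ∈ Set.Icc (0 : ℝ) 1 := Set.left_mem_Icc.2 zero_le_one
  have h1 : (1 : ℝ) ∈ Set.Icc (0 : ℝ) 1 := Set.right_mem_Icc.2 zero_le_one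
  refine lt_of_lt_of_le ?_ (cc.dist_le_diamJ σ ⟨1, h1, rfl⟩ ⟨0, h0, rfl⟩)
  refine lt_of_lt_of_le ?_ (cc.φnorm_mul_le_wordMap_sub σ h1 h0)
  have := cc.xi_pos
  have := cc.φnorm_pos σ
  simp only [sub_zero, abs_one, mul_one]
  positivity

lemma diamJ_mul_diamJ_le (σ τ : List (Fin cc.N)) :
    cc.diamJ σ * cc.diamJ τ ≤ cc.xi * cc.diamJ (σ ++ τ) := by
  have hk : 0 < cc.xi⁻¹ * cc.φnorm σ := mul_pos (inv_pos.2 cc.xi_pos) (cc.φnorm_pos σ)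
  have h1 : cc.diamJ τ ≤ cc.diamJ (σ ++ τ) / (cc.xi⁻¹ * cc.φnorm σ) := by
    refine Metric.diam_le_of_forall_dist_le (div_nonneg (cc.diamJ_nonneg _) hk.le) ?_
    intro x hx y hy
    rw [le_div_iff₀' hk]
    refine (cc.φnorm_mul_le_wordMap_sub σ (cc.Jc_subset_Icc τ hx)
      (cc.Jc_subset_Icc τ hy)).trans ?_
    refine cc.dist_le_diamJ _ ?_ ?_ <;> rw [Jc_append] <;> exact Set.mem_image_of_mem _ ‹_›
  rw [le_div_iff₀' hk] at h1
  calc cc.diamJ σ * cc.diamJ τ ≤ cc.φnorm σ * cc.diamJ τ :=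
        mul_le_mul_of_nonneg_right (cc.diamJ_le_φnorm σ) (cc.diamJ_nonneg τ)
    _ = cc.xi * (cc.xi⁻¹ * cc.φnorm σ * cc.diamJ τ) := by
        have := cc.xi_pos.ne'
        field_simp
    _ ≤ _ := mul_le_mul_of_nonneg_left h1 cc.xi_pos.le

lemma prefix_or_prefix_of_mem_Jc {σ τ : List (Fin cc.N)} {x : ℝ} (hσ : x ∈ cc.Jc σ)
    (hτ : x ∈ cc.Jc τ) : σ <+: τ ∨ τ <+: σ := by
  induction σ generalizing τ x with
  | nil => exact Or.inl List.nil_prefix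
  | cons i σ ih =>
    cases τ with
    | nil => exact Or.inr List.nil_prefix
    | cons j τ =>
      obtain ⟨y, hy, rfl⟩ := hσ
      obtain ⟨z, hz, hzy⟩ := hτ
      have hij : i = j := by
        by_contra hne
        refine Set.disjoint_left.1 (cc.hJsub_disj i j hne) (cc.wordMap_cons_mem_Jsub i σ hy) ?_
        rw [← hzy]
        exact cc.wordMap_cons_mem_Jsub j τ hz
      subst hij
      have := cc.φ_injOn i (cc.wordMap_mem_Icc τ hz) (cc.wordMap_mem_Icc σ hy) hzy
      simp only [List.cons_prefix_cons, true_and]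
      exact ih ⟨y, hy, rfl⟩ ⟨z, hz, this⟩

lemma disjoint_Jc_of_length_eq {σ τ : List (Fin cc.N)} (hl : σ.length = τ.length)
    (hne : σ ≠ τ) : Disjoint (cc.Jc σ) (cc.Jc τ) :=
  Set.disjoint_left.2 fun _ hσ hτ => (cc.prefix_or_prefix_of_mem_Jc hσ hτ).elim
    (fun hp => hne (hp.eq_of_length hl)) fun hp => hne (hp.eq_of_length hl.symm).symm

lemma IsFMA.disjoint_Jc {Γ : Finset (List (Fin cc.N))} (hΓ : cc.IsFMA Γ)
    {σ τ : List (Fin cc.N)} (hσ : σ ∈ Γ) (hτ : τ ∈ Γ) (hne : σ ≠ τ) :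
    Disjoint (cc.Jc σ) (cc.Jc τ) :=
  Set.disjoint_left.2 fun _ hxσ hxτ => (cc.prefix_or_prefix_of_mem_Jc hxσ hxτ).elim
    (fun hp => hne (hΓ.2.2 σ hσ τ hτ hp)) fun hp => hne (hΓ.2.2 τ hτ σ hσ hp).symm

lemma wordMap_strictMonoOn_or_strictAntiOn (σ : List (Fin cc.N)) :
    StrictMonoOn (cc.wordMap σ) (Set.Icc 0 1) ∨ StrictAntiOn (cc.wordMap σ) (Set.Icc 0 1) :=
  (cc.wordMap_continuousOn σ).strictMonoOn_of_injOn_Icc' zero_le_one (cc.wordMap_injOn σ)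

lemma wordMap_mem_Ioo (σ : List (Fin cc.N)) {x : ℝ} (hx : x ∈ Set.Ioo (0 : ℝ) 1) :
    cc.wordMap σ x ∈ Set.Ioo (0 : ℝ) 1 := by
  have h0 : (0 : ℝ) ∈ Set.Icc (0 : ℝ) 1 := Set.left_mem_Icc.2 zero_le_one
  have h1 : (1 : ℝ) ∈ Set.Icc (0 : ℝ) 1 := Set.right_mem_Icc.2 zero_le_one
  have hxI := Set.Ioo_subset_Icc_self hx
  have e0 := cc.wordMap_mem_Icc σ h0
  have e1 := cc.wordMap_mem_Icc σ h1
  rcases cc.wordMap_strictMonoOn_or_strictAntiOn σ with hm | hm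
  · exact ⟨e0.1.trans_lt (hm h0 hxI hx.1), (hm hxI h1 hx.2).trans_le e1.2⟩
  · exact ⟨e1.1.trans_lt (hm hxI h1 hx.2), (hm h0 hxI hx.1).trans_le e0.2⟩

/-- A point outside `φ_σ((0,1))` is at least as far from a point of `J_σ` as one of the
endpoints of `J_σ`. -/
lemma exists_Ioo_or_endpoint (σ : List (Fin cc.N)) {y : ℝ} (hy : y ∈ Set.Icc (0 : ℝ) 1) (p : ℝ) :
    (∃ q ∈ Set.Ioo (0 : ℝ) 1, cc.wordMap σ q = p) ∨
      ∃ e ∈ Set.Icc (0 : ℝ) 1 \ Set.Ioo 0 1,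
        |cc.wordMap σ y - cc.wordMap σ e| ≤ |cc.wordMap σ y - p| := by
  have h0 : (0 : ℝ) ∈ Set.Icc (0 : ℝ) 1 := Set.left_mem_Icc.2 zero_le_one
  have h1 : (1 : ℝ) ∈ Set.Icc (0 : ℝ) 1 := Set.right_mem_Icc.2 zero_le_one
  have h0' : (0 : ℝ) ∈ Set.Icc (0 : ℝ) 1 \ Set.Ioo 0 1 := ⟨h0, by simp⟩
  have h1' : (1 : ℝ) ∈ Set.Icc (0 : ℝ) 1 \ Set.Ioo 0 1 := ⟨h1, by simp⟩
  have hcont := cc.wordMap_continuousOn σ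
  have key : ∀ {a t : ℝ}, p ≤ a → a ≤ t → |t - a| ≤ |t - p| := fun hpa hat => by
    rw [abs_of_nonneg (by linarith), abs_of_nonneg (by linarith)]; linarith
  have key' : ∀ {b t : ℝ}, b ≤ p → t ≤ b → |t - b| ≤ |t - p| := fun hbp htb => by
    rw [abs_of_nonpos (by linarith), abs_of_nonpos (by linarith)]; linarith
  rcases cc.wordMap_strictMonoOn_or_strictAntiOn σ with hm | hm
  · rcases le_or_gt p (cc.wordMap σ 0) with hp0 | hp0
    · exact Or.inr ⟨0, h0', key hp0 (hm.monotoneOn h0 hy hy.1)⟩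
    rcases le_or_gt (cc.wordMap σ 1) p with hp1 | hp1
    · exact Or.inr ⟨1, h1', key' hp1 (hm.monotoneOn hy h1 hy.2)⟩
    · exact Or.inl (intermediate_value_Ioo zero_le_one hcont ⟨hp0, hp1⟩)
  · rcases le_or_gt p (cc.wordMap σ 1) with hp1 | hp1
    · exact Or.inr ⟨1, h1', key hp1 (hm.antitoneOn hy h1 hy.2)⟩
    rcases le_or_gt (cc.wordMap σ 0) p with hp0 | hp0
    · exact Or.inr ⟨0, h0', key' hp0 (hm.antitoneOn h0 hy hy.1)⟩
    · exact Or.inl (intermediate_value_Ioo' zero_le_one hcont ⟨hp1, hp0⟩)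

end CookieCutter

/-- The integrand `d(x, S ∪ (0,1)ᶜ)^r` of the auxiliary quantization error. -/
def boundaryCost (S : Set ℝ) (r x : ℝ) : ℝ :=
  Metric.infDist x (S ∪ (Set.Ioo (0 : ℝ) 1)ᶜ) ^ r

section boundaryCost

variable {S : Set ℝ} {r : ℝ} {μ : Measure ℝ}

lemma mem_union_compl_Ioo {x : ℝ} (S : Set ℝ) (hx : x ∉ Set.Ioo (0 : ℝ) 1) :
    x ∈ S ∪ (Set.Ioo (0 : ℝ) 1)ᶜ :=
  Or.inr hx

lemma zero_mem_union_compl_Ioo (S : Set ℝ) : (0 : ℝ) ∈ S ∪ (Set.Ioo (0 : ℝ) 1)ᶜ :=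
  mem_union_compl_Ioo S (by simp)

lemma infDist_union_compl_Ioo_le_one (S : Set ℝ) (x : ℝ) :
    Metric.infDist x (S ∪ (Set.Ioo (0 : ℝ) 1)ᶜ) ≤ 1 := by
  by_cases hx : x ∈ Set.Ioo (0 : ℝ) 1
  · refine (Metric.infDist_le_dist_of_mem (zero_mem_union_compl_Ioo S)).trans ?_
    rw [Real.dist_eq, sub_zero, abs_of_pos hx.1]
    exact hx.2.le
  · rw [Metric.infDist_zero_of_mem (mem_union_compl_Ioo _ hx)]
    exact zero_le_one

lemma boundaryCost_nonneg (S : Set ℝ) (r x : ℝ) : 0 ≤ boundaryCost S r x :=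
  Real.rpow_nonneg Metric.infDist_nonneg _

lemma boundaryCost_le_one (S : Set ℝ) (hr : 0 < r) (x : ℝ) : boundaryCost S r x ≤ 1 :=
  Real.rpow_le_one Metric.infDist_nonneg (infDist_union_compl_Ioo_le_one S x) hr.le

lemma continuous_boundaryCost (S : Set ℝ) (hr : 0 < r) : Continuous (boundaryCost S r) :=
  (Metric.continuous_infDist_pt _).rpow_const fun _ => Or.inr hr.le

lemma integrable_boundaryCost [IsFiniteMeasure μ] (S : Set ℝ) (hr : 0 < r) :
    Integrable (boundaryCost S r) μ := by
  refine Integrable.of_bound (continuous_boundaryCost S hr).aestronglyMeasurable 1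
    (Filter.Eventually.of_forall fun x => ?_)
  rw [Real.norm_eq_abs, abs_of_nonneg (boundaryCost_nonneg S r x)]
  exact boundaryCost_le_one S hr x

lemma unr_le_integral_boundaryCost {α : Finset ℝ} {n : ℕ} (hα : α.card ≤ n) :
    unr μ n r ≤ ∫ x, boundaryCost α r x ∂μ := by
  refine csInf_le ⟨0, ?_⟩ ⟨α, hα, rfl⟩
  rintro _ ⟨β, -, rfl⟩
  exact integral_nonneg fun x => boundaryCost_nonneg β r x

lemma exists_integral_boundaryCost_lt {n : ℕ} {δ : ℝ} (hδ : unr μ n r < δ) :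
    ∃ α : Finset ℝ, α.card ≤ n ∧ ∫ x, boundaryCost α r x ∂μ < δ := by
  obtain ⟨_, ⟨α, hα, rfl⟩, hlt⟩ := exists_lt_of_csInf_lt (Set.Nonempty.image _ ⟨∅, by simp⟩) hδ
  exact ⟨α, hα, hlt⟩

lemma le_unr {n : ℕ} {a : ℝ}
    (ha : ∀ α : Finset ℝ, α.card ≤ n → a ≤ ∫ x, boundaryCost α r x ∂μ) : a ≤ unr μ n r := by
  refine le_csInf (Set.Nonempty.image _ ⟨∅, by simp⟩) ?_
  rintro _ ⟨α, hα, rfl⟩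
  exact ha α hα

/-- The auxiliary quantization errors tend to `0`. -/
lemma exists_forall_unr_lt [IsProbabilityMeasure μ] (hr : 0 < r) {δ : ℝ} (hδ : 0 < δ) :
    ∃ n₀ : ℕ, ∀ n, n₀ ≤ n → unr μ n r < δ := by
  have he : 0 < (δ / 2) ^ r⁻¹ := Real.rpow_pos_of_pos (half_pos hδ) _
  obtain ⟨t, -, htf, htc⟩ := (isCompact_Icc (a := (0 : ℝ)) (b := 1)).finite_cover_balls he
  refine ⟨htf.toFinset.card, fun n hn => ?_⟩
  refine (unr_le_integral_boundaryCost hn).trans_lt (lt_of_le_of_lt ?_ (half_lt_self hδ))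
  have hle : ∀ x, boundaryCost (htf.toFinset : Set ℝ) r x ≤ δ / 2 := fun x => by
    refine (Real.le_rpow_inv_iff_of_pos Metric.infDist_nonneg (half_pos hδ).le hr).1 ?_
    by_cases hx : x ∈ Set.Ioo (0 : ℝ) 1
    · obtain ⟨y, hy, hxy⟩ := Set.mem_iUnion₂.1 (htc (Set.Ioo_subset_Icc_self hx))
      have hyt : y ∈ (htf.toFinset : Set ℝ) ∪ (Set.Ioo (0 : ℝ) 1)ᶜ := Or.inl (by simpa using hy)
      exact (Metric.infDist_le_dist_of_mem hyt).trans
        (Metric.mem_ball.1 hxy).le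
    · rw [Metric.infDist_zero_of_mem (mem_union_compl_Ioo _ hx)]
      exact he.le
  refine (integral_mono (integrable_boundaryCost _ hr) (integrable_const _) hle).trans_eq ?_
  simp

end boundaryCost

namespace CookieCutter

variable {cc : CookieCutter} {μ : Measure ℝ} {h r : ℝ}

lemma disjoint_Jc_append_ofFn (cc : CookieCutter) (σ : List (Fin cc.N)) (m : ℕ) :
    Pairwise (Function.onFun Disjoint
      fun τ : Fin m → Fin cc.N => cc.Jc (σ ++ List.ofFn τ)) := fun τ τ' hne =>
  cc.disjoint_Jc_of_length_eq (by simp) fun he =>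
    hne (List.ofFn_injective (List.append_cancel_left he))

namespace IsGibbsLike

lemma real_Jc_pos (hμ : cc.IsGibbsLike μ h) {σ : List (Fin cc.N)} (hσ : σ ≠ []) :
    0 < μ.real (cc.Jc σ) :=
  (mul_pos (inv_pos.2 (cc.eta_pos h)) (Real.rpow_pos_of_pos (cc.diamJ_pos σ) _)).trans_le
    (hμ.2.2 σ hσ).1

lemma ae_mem_iUnion_Jc (hμ : cc.IsGibbsLike μ h) {m : ℕ} (hm : 1 ≤ m) :
    ∀ᵐ x ∂μ, x ∈ ⋃ τ : Fin m → Fin cc.N, cc.Jc (List.ofFn τ) := by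
  have hE : ∀ᵐ x ∂μ, x ∈ cc.E := hμ.2.1
  exact hE.mono fun x hx => Set.mem_iInter₂.1 hx m hm

lemma real_Jc_mul_real_Jc_le (hμ : cc.IsGibbsLike μ h) (hh : 0 < h) {σ τ : List (Fin cc.N)}
    (hσ : σ ≠ []) (hτ : τ ≠ []) :
    μ.real (cc.Jc σ) * μ.real (cc.Jc τ) ≤ cc.Lconst h * μ.real (cc.Jc (σ ++ τ)) := by
  have hη := cc.eta_pos h
  have hξ := cc.xi_pos
  have h1 := (hμ.2.2 σ hσ).2
  have h2 := (hμ.2.2 τ hτ).2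
  have h3 := (hμ.2.2 (σ ++ τ) (by simp [hσ])).1
  rw [inv_mul_le_iff₀ hη] at h3
  have hξh : cc.xi ^ h ≤ cc.xi ^ ((3 : ℝ) * h) :=
    Real.rpow_le_rpow_of_exponent_le cc.one_le_xi (by linarith)
  have hd := Real.rpow_le_rpow (mul_nonneg (cc.diamJ_nonneg σ) (cc.diamJ_nonneg τ))
    (cc.diamJ_mul_diamJ_le σ τ) hh.le
  rw [Real.mul_rpow (cc.diamJ_nonneg σ) (cc.diamJ_nonneg τ),
    Real.mul_rpow hξ.le (cc.diamJ_nonneg _)] at hd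
  have hM : 0 ≤ μ.real (cc.Jc (σ ++ τ)) := measureReal_nonneg
  calc μ.real (cc.Jc σ) * μ.real (cc.Jc τ)
      ≤ (cc.eta h * cc.diamJ σ ^ h) * (cc.eta h * cc.diamJ τ ^ h) :=
        mul_le_mul h1 h2 measureReal_nonneg
          (mul_nonneg hη.le (Real.rpow_nonneg (cc.diamJ_nonneg σ) _))
    _ = cc.eta h ^ 2 * (cc.diamJ σ ^ h * cc.diamJ τ ^ h) := by ring
    _ ≤ cc.eta h ^ 2 * (cc.xi ^ h * cc.diamJ (σ ++ τ) ^ h) := by gcongr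
    _ ≤ cc.eta h ^ 2 * (cc.xi ^ ((3 : ℝ) * h) * (cc.eta h * μ.real (cc.Jc (σ ++ τ)))) := by
        have := Real.rpow_nonneg (cc.diamJ_nonneg (σ ++ τ)) h
        gcongr
        exact h3
    _ = cc.Lconst h * μ.real (cc.Jc (σ ++ τ)) := by rw [Lconst]; ring

lemma real_singleton_eq_zero (hμ : cc.IsGibbsLike μ h) (hh : 0 < h) (x : ℝ) :
    μ.real {x} = 0 := by
  have := hμ.1
  by_cases hx : x ∈ cc.E
  · refine le_antisymm (ge_of_tendsto' (f := fun n : ℕ => cc.eta h * (cc.b⁻¹ ^ (n + 1)) ^ h)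
      (x := Filter.atTop) ?_ fun n => ?_) measureReal_nonneg
    · have h1 : Filter.Tendsto (fun n : ℕ => cc.b⁻¹ ^ (n + 1)) Filter.atTop (nhds 0) :=
        (Filter.tendsto_add_atTop_iff_nat 1).2 (tendsto_pow_atTop_nhds_zero_of_lt_one
          (inv_nonneg.2 cc.b_pos.le) (inv_lt_one_of_one_lt₀ cc.hb1))
      have h2 := (h1.rpow_const (Or.inr hh.le)).const_mul (cc.eta h)
      rwa [Real.zero_rpow hh.ne', mul_zero] at h2
    · obtain ⟨τ, hτ⟩ := Set.mem_iUnion.1 (Set.mem_iInter₂.1 hx (n + 1) (by simp))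
      have hne : List.ofFn τ ≠ [] := by simp
      calc μ.real {x} ≤ μ.real (cc.Jc (List.ofFn τ)) :=
            measureReal_mono (Set.singleton_subset_iff.2 hτ)
        _ ≤ _ := (hμ.2.2 _ hne).2
        _ ≤ _ := by
            have hd := cc.diamJ_le_pow (List.ofFn τ)
            rw [List.length_ofFn] at hd
            exact mul_le_mul_of_nonneg_left
              (Real.rpow_le_rpow (cc.diamJ_nonneg _) hd hh.le) (cc.eta_pos h).le
  · rw [measureReal_def, measure_mono_null (Set.singleton_subset_iff.2 hx) hμ.2.1]
    rfl

lemma integral_boundaryCost_empty_pos (hμ : cc.IsGibbsLike μ h) (hh : 0 < h) (hr : 0 < r) :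
    0 < ∫ x, boundaryCost ∅ r x ∂μ := by
  have := hμ.1
  refine (integral_nonneg fun x => boundaryCost_nonneg ∅ r x).lt_of_ne' fun h0 => ?_
  rw [integral_eq_zero_iff_of_nonneg (fun x => boundaryCost_nonneg ∅ r x)
    (integrable_boundaryCost _ hr)] at h0
  have hsing : ∀ y : ℝ, ∀ᵐ x ∂μ, x ≠ y := fun y => by
    have := hμ.real_singleton_eq_zero hh y
    rw [measureReal_eq_zero_iff] at this
    exact measure_eq_zero_iff_ae_notMem.1 this
  have hfalse : ∀ᵐ x ∂μ, False := by
    filter_upwards [h0, hμ.ae_mem_iUnion_Jc le_rfl, hsing 0, hsing 1] with x hx hxU hx0 hx1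
    obtain ⟨τ, hτ⟩ := Set.mem_iUnion.1 hxU
    have hI := cc.Jc_subset_Icc _ hτ
    have hIoo : x ∈ Set.Ioo (0 : ℝ) 1 := ⟨hI.1.lt_of_ne' hx0, hI.2.lt_of_ne hx1⟩
    have hd := ((Real.rpow_eq_zero_iff_of_nonneg Metric.infDist_nonneg).1 hx).1
    rw [Set.empty_union] at hd
    exact (isOpen_Ioo.isClosed_compl.mem_iff_infDist_zero ⟨0, by simp⟩).2 hd hIoo
  simp only [Filter.eventually_false_iff_eq_bot, ae_eq_bot] at hfalse
  exact IsProbabilityMeasure.ne_zero μ hfalse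

/-- Integral form of the quasi-multiplicativity `μ(J_σ) μ(A) ≤ L μ(φ_σ(A))`. -/
lemma real_Jc_mul_integral_le (hμ : cc.IsGibbsLike μ h) (hh : 0 < h) {σ : List (Fin cc.N)}
    (hσ : σ ≠ []) {g G : ℝ → ℝ} (hgc : Continuous g) (hg0 : ∀ x, 0 ≤ g x)
    (hgi : Integrable g μ) (hG0 : ∀ x, 0 ≤ G x) (hGi : Integrable G μ)
    (hgG : ∀ y ∈ Set.Icc (0 : ℝ) 1, g y ≤ G (cc.wordMap σ y)) :
    μ.real (cc.Jc σ) * ∫ x, g x ∂μ ≤ cc.Lconst h * ∫ x in cc.Jc σ, G x ∂μ := by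
  have := hμ.1
  have hL : 0 ≤ cc.Lconst h :=
    mul_nonneg (pow_nonneg (cc.eta_pos h).le 3) (Real.rpow_nonneg cc.xi_pos.le _)
  refine le_of_forall_pos_le_add fun ε hε => ?_
  obtain ⟨δ, hδ, hunif⟩ := Metric.uniformContinuousOn_iff.1
    ((isCompact_Icc (a := (0 : ℝ)) (b := 1)).uniformContinuousOn_of_continuous hgc.continuousOn)
    (ε / 2) (half_pos hε)
  obtain ⟨m, hm⟩ := exists_pow_lt_of_lt_one hδ (inv_lt_one_of_one_lt₀ cc.hb1)
  have hm' : cc.b⁻¹ ^ (m + 1) < δ :=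
    (pow_le_pow_of_le_one (inv_nonneg.2 cc.b_pos.le) (inv_le_one_of_one_le₀ cc.hb1.le)
      m.le_succ).trans_lt hm
  have h0 : (0 : ℝ) ∈ Set.Icc (0 : ℝ) 1 := Set.left_mem_Icc.2 zero_le_one
  set w : (Fin (m + 1) → Fin cc.N) → List (Fin cc.N) := fun τ => List.ofFn τ
  have hw : ∀ τ, w τ ≠ [] := fun τ => by simp [w]
  set a : (Fin (m + 1) → Fin cc.N) → ℝ := fun τ => max 0 (g (cc.wordMap (w τ) 0) - ε / 2)
  have hclose : ∀ τ, ∀ y ∈ cc.Jc (w τ), a τ ≤ g y ∧ g y ≤ a τ + ε := fun τ y hy => by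
    have hlen : (w τ).length = m + 1 := by simp [w]
    have hz : cc.wordMap (w τ) 0 ∈ cc.Jc (w τ) := ⟨0, h0, rfl⟩
    have hd := (cc.dist_le_diamJ _ hy hz).trans (cc.diamJ_le_pow (w τ))
    rw [hlen] at hd
    have hg := hunif y (cc.Jc_subset_Icc _ hy) _ (cc.Jc_subset_Icc _ hz) (hd.trans_lt hm')
    rw [Real.dist_eq, abs_lt] at hg
    refine ⟨max_le (hg0 y) (by linarith [hg.1]), ?_⟩
    linarith [hg.2, le_max_right 0 (g (cc.wordMap (w τ) 0) - ε / 2)]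
  have hdisj : Pairwise (Function.onFun Disjoint fun τ => cc.Jc (w τ)) :=
    cc.disjoint_Jc_append_ofFn [] (m + 1)
  have hupper : ∫ x, g x ∂μ ≤ ∑ τ, μ.real (cc.Jc (w τ)) * a τ + ε := by
    have hsum : ∑ τ, μ.real (cc.Jc (w τ)) ≤ 1 := by
      rw [← measureReal_iUnion_fintype hdisj fun τ => cc.measurableSet_Jc _]
      exact measureReal_le_one
    calc ∫ x, g x ∂μ = ∫ x in ⋃ τ, cc.Jc (w τ), g x ∂μ := by
          rw [Measure.restrict_eq_self_of_ae_mem (hμ.ae_mem_iUnion_Jc (by simp))]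
      _ = ∑ τ, ∫ x in cc.Jc (w τ), g x ∂μ :=
          integral_iUnion_fintype (fun τ => cc.measurableSet_Jc _) hdisj
            fun τ => hgi.integrableOn
      _ ≤ ∑ τ, μ.real (cc.Jc (w τ)) * (a τ + ε) := Finset.sum_le_sum fun τ _ => by
          rw [← smul_eq_mul, ← setIntegral_const]
          exact setIntegral_mono_on hgi.integrableOn (integrable_const _)
            (cc.measurableSet_Jc _) fun y hy => (hclose τ y hy).2
      _ = ∑ τ, μ.real (cc.Jc (w τ)) * a τ + (∑ τ, μ.real (cc.Jc (w τ))) * ε := by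
          rw [Finset.sum_mul, ← Finset.sum_add_distrib]
          simp only [mul_add]
      _ ≤ _ := by nlinarith
  have hlower : ∑ τ, μ.real (cc.Jc (σ ++ w τ)) * a τ ≤ ∫ x in cc.Jc σ, G x ∂μ := by
    calc ∑ τ, μ.real (cc.Jc (σ ++ w τ)) * a τ ≤ ∑ τ, ∫ x in cc.Jc (σ ++ w τ), G x ∂μ :=
          Finset.sum_le_sum fun τ _ => by
            rw [← smul_eq_mul]
            refine setIntegral_ge_of_const_le (cc.measurableSet_Jc _) (measure_ne_top _ _)
              (fun x hx => ?_) hGi.integrableOn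
            rw [Jc_append] at hx
            obtain ⟨y, hy, rfl⟩ := hx
            exact (hclose τ y hy).1.trans (hgG y (cc.Jc_subset_Icc _ hy))
      _ = ∫ x in ⋃ τ, cc.Jc (σ ++ w τ), G x ∂μ :=
          (integral_iUnion_fintype (fun τ => cc.measurableSet_Jc _)
            (cc.disjoint_Jc_append_ofFn σ (m + 1)) fun τ => hGi.integrableOn).symm
      _ ≤ _ := setIntegral_mono_set hGi.integrableOn (Filter.Eventually.of_forall hG0)
          (Filter.Eventually.of_forall (Set.iUnion_subset fun τ => cc.Jc_append_subset σ (w τ)))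
  have hM1 : μ.real (cc.Jc σ) ≤ 1 := measureReal_le_one
  have hM0 : 0 ≤ μ.real (cc.Jc σ) := measureReal_nonneg
  calc μ.real (cc.Jc σ) * ∫ x, g x ∂μ
      ≤ μ.real (cc.Jc σ) * (∑ τ, μ.real (cc.Jc (w τ)) * a τ + ε) :=
        mul_le_mul_of_nonneg_left hupper hM0
    _ = ∑ τ, μ.real (cc.Jc σ) * μ.real (cc.Jc (w τ)) * a τ + μ.real (cc.Jc σ) * ε := by
        rw [mul_add, Finset.mul_sum]
        simp only [mul_assoc]
    _ ≤ ∑ τ, cc.Lconst h * μ.real (cc.Jc (σ ++ w τ)) * a τ + 1 * ε := by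
        refine add_le_add (Finset.sum_le_sum fun τ _ => ?_) (by gcongr)
        exact mul_le_mul_of_nonneg_right (hμ.real_Jc_mul_real_Jc_le hh hσ (hw τ))
          (le_max_left _ _)
    _ = cc.Lconst h * ∑ τ, μ.real (cc.Jc (σ ++ w τ)) * a τ + ε := by
        rw [Finset.mul_sum, one_mul]
        simp only [mul_assoc]
    _ ≤ _ := by gcongr

end IsGibbsLike

lemma finite_wordMap_preimage (cc : CookieCutter) (σ : List (Fin cc.N)) (α : Finset ℝ) :
    (Set.Ioo (0 : ℝ) 1 ∩ cc.wordMap σ ⁻¹' α).Finite :=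
  Set.Finite.of_finite_image (α.finite_toSet.subset (Set.image_subset_iff.2 fun _ hx => hx.2))
    ((cc.wordMap_injOn σ).mono fun _ hx => Set.Ioo_subset_Icc_self hx.1)

/-- The points of `(0,1)` that `φ_σ` maps into `α`. -/
def pullback (cc : CookieCutter) (σ : List (Fin cc.N)) (α : Finset ℝ) : Finset ℝ :=
  (cc.finite_wordMap_preimage σ α).toFinset

lemma mem_pullback {σ : List (Fin cc.N)} {α : Finset ℝ} {x : ℝ} :
    x ∈ cc.pullback σ α ↔ x ∈ Set.Ioo (0 : ℝ) 1 ∧ cc.wordMap σ x ∈ α := by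
  simp [pullback]

lemma IsFMA.sum_card_pullback_le {Γ : Finset (List (Fin cc.N))} (hΓ : cc.IsFMA Γ)
    (α : Finset ℝ) : ∑ σ ∈ Γ, (cc.pullback σ α).card ≤ α.card := by
  classical
  have hsub : ∀ σ, ((cc.pullback σ α).image (cc.wordMap σ) : Set ℝ) ⊆ cc.Jc σ := fun σ x hx => by
    obtain ⟨y, hy, rfl⟩ := Finset.mem_image.1 (Finset.mem_coe.1 hx)
    exact ⟨y, Set.Ioo_subset_Icc_self (mem_pullback.1 hy).1, rfl⟩
  calc ∑ σ ∈ Γ, (cc.pullback σ α).card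
      = ∑ σ ∈ Γ, ((cc.pullback σ α).image (cc.wordMap σ)).card :=
        Finset.sum_congr rfl fun σ _ => (Finset.card_image_of_injOn ((cc.wordMap_injOn σ).mono
          fun x hx => Set.Ioo_subset_Icc_self (mem_pullback.1 hx).1)).symm
    _ = (Γ.biUnion fun σ => (cc.pullback σ α).image (cc.wordMap σ)).card := by
        refine (Finset.card_biUnion fun σ hσ τ hτ hne => ?_).symm
        rw [Function.onFun, ← Finset.disjoint_coe]
        exact (IsFMA.disjoint_Jc cc hΓ hσ hτ hne).mono (hsub σ) (hsub τ)
    _ ≤ α.card := Finset.card_le_card (Finset.biUnion_subset.2 fun σ _ =>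
        Finset.image_subset_iff.2 fun x hx => (mem_pullback.1 hx).2)

lemma mul_infDist_pullback_le (cc : CookieCutter) (σ : List (Fin cc.N)) (α : Finset ℝ) {y : ℝ}
    (hy : y ∈ Set.Icc (0 : ℝ) 1) :
    cc.xi⁻¹ * cc.φnorm σ * Metric.infDist y ((cc.pullback σ α : Set ℝ) ∪ (Set.Ioo (0 : ℝ) 1)ᶜ) ≤
      Metric.infDist (cc.wordMap σ y) ((α : Set ℝ) ∪ (Set.Ioo (0 : ℝ) 1)ᶜ) := by
  have hk : 0 ≤ cc.xi⁻¹ * cc.φnorm σ :=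
    mul_nonneg (inv_nonneg.2 cc.xi_pos.le) (cc.φnorm_pos σ).le
  have key : ∀ q ∈ Set.Icc (0 : ℝ) 1, q ∈ (cc.pullback σ α : Set ℝ) ∪ (Set.Ioo (0 : ℝ) 1)ᶜ →
      cc.xi⁻¹ * cc.φnorm σ * Metric.infDist y ((cc.pullback σ α : Set ℝ) ∪ (Set.Ioo (0 : ℝ) 1)ᶜ) ≤
        |cc.wordMap σ y - cc.wordMap σ q| := fun q hq hqS =>
    (mul_le_mul_of_nonneg_left (Metric.infDist_le_dist_of_mem hqS) hk).trans
      (cc.φnorm_mul_le_wordMap_sub σ hy hq)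
  refine (Metric.le_infDist ⟨0, zero_mem_union_compl_Ioo _⟩).2 fun p hp => ?_
  rw [Real.dist_eq]
  rcases cc.exists_Ioo_or_endpoint σ hy p with ⟨q, hq, rfl⟩ | ⟨e, he, hle⟩
  · refine key q (Set.Ioo_subset_Icc_self hq) (Or.inl ?_)
    exact mem_pullback.2 ⟨hq, hp.resolve_right (not_not.2 (cc.wordMap_mem_Ioo σ hq))⟩
  · exact (key e he.1 (Or.inr he.2)).trans hle

/-- Localisation of the quantization cost of `α` to the basic interval `J_σ`. -/
lemma IsGibbsLike.mul_integral_pullback_le (hμ : cc.IsGibbsLike μ h) (hh : 0 < h) (hr : 0 < r)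
    {σ : List (Fin cc.N)} (hσ : σ ≠ []) (α : Finset ℝ) :
    (cc.Lconst h * cc.xi ^ r)⁻¹ *
        (μ.real (cc.Jc σ) * cc.φnorm σ ^ r * ∫ x, boundaryCost (cc.pullback σ α) r x ∂μ) ≤
      ∫ x in cc.Jc σ, boundaryCost α r x ∂μ := by
  have := hμ.1
  have hξ := cc.xi_pos
  have hφ := cc.φnorm_pos σ
  have hL : 0 < cc.Lconst h :=
    mul_pos (pow_pos (cc.eta_pos h) 3) (Real.rpow_pos_of_pos hξ _)
  have hk : 0 ≤ cc.xi⁻¹ * cc.φnorm σ := by positivity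
  have hmain := hμ.real_Jc_mul_integral_le hh hσ
    (g := fun x => (cc.xi⁻¹ * cc.φnorm σ) ^ r * boundaryCost (cc.pullback σ α) r x)
    (G := boundaryCost α r) ((continuous_boundaryCost _ hr).const_mul _)
    (fun x => mul_nonneg (Real.rpow_nonneg hk _) (boundaryCost_nonneg _ r x))
    ((integrable_boundaryCost _ hr).const_mul _) (boundaryCost_nonneg α r)
    (integrable_boundaryCost _ hr) fun y hy => by
      rw [boundaryCost, ← Real.mul_rpow hk Metric.infDist_nonneg]
      exact Real.rpow_le_rpow (mul_nonneg hk Metric.infDist_nonneg)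
        (cc.mul_infDist_pullback_le σ α hy) hr.le
  rw [integral_const_mul, Real.mul_rpow (inv_nonneg.2 hξ.le) hφ.le, Real.inv_rpow hξ.le] at hmain
  have hξr : 0 < cc.xi ^ r := Real.rpow_pos_of_pos hξ _
  rw [← inv_mul_le_iff₀ hL] at hmain
  refine le_of_eq_of_le ?_ hmain
  rw [mul_inv]
  ring

lemma IsGibbsLike.sum_mul_integral_pullback_le (hμ : cc.IsGibbsLike μ h) (hh : 0 < h)
    (hr : 0 < r) {Γ : Finset (List (Fin cc.N))} (hΓ : cc.IsFMA Γ) (α : Finset ℝ) :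
    (cc.Lconst h * cc.xi ^ r)⁻¹ * ∑ σ ∈ Γ,
        μ.real (cc.Jc σ) * cc.φnorm σ ^ r * ∫ x, boundaryCost (cc.pullback σ α) r x ∂μ ≤
      ∫ x, boundaryCost α r x ∂μ := by
  have := hμ.1
  have hint := integrable_boundaryCost (μ := μ) α hr
  rw [Finset.mul_sum]
  calc _ ≤ ∑ σ ∈ Γ, ∫ x in cc.Jc σ, boundaryCost α r x ∂μ :=
        Finset.sum_le_sum fun σ hσ => hμ.mul_integral_pullback_le hh hr (hΓ.1 σ hσ) α
    _ = ∫ x in ⋃ σ ∈ Γ, cc.Jc σ, boundaryCost α r x ∂μ :=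
        (integral_biUnion_finset Γ (fun σ _ => cc.measurableSet_Jc σ)
          (fun σ hσ τ hτ hne => IsFMA.disjoint_Jc cc hΓ hσ hτ hne)
          fun σ _ => hint.integrableOn).symm
    _ ≤ _ := setIntegral_le_integral hint
        (Filter.Eventually.of_forall (boundaryCost_nonneg α r))

/-- A configuration of small cost meets every `φ_σ((0,1))` with `σ ∈ Γ`. -/
lemma IsGibbsLike.exists_pos_forall_pullback_nonempty (hμ : cc.IsGibbsLike μ h) (hh : 0 < h)
    (hr : 0 < r) {Γ : Finset (List (Fin cc.N))} (hΓ : cc.IsFMA Γ) :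
    ∃ δ > 0, ∀ α : Finset ℝ, ∫ x, boundaryCost α r x ∂μ < δ →
      ∀ σ ∈ Γ, (cc.pullback σ α).Nonempty := by
  have := hμ.1
  set c : List (Fin cc.N) → ℝ := fun σ => (cc.Lconst h * cc.xi ^ r)⁻¹ *
    (μ.real (cc.Jc σ) * cc.φnorm σ ^ r * ∫ x, boundaryCost ∅ r x ∂μ) with hc
  have hcpos : ∀ σ ∈ Γ, 0 < c σ := fun σ hσ => by
    have h1 := hμ.real_Jc_pos (hΓ.1 σ hσ)
    have h2 := hμ.integral_boundaryCost_empty_pos hh hr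
    have h3 := cc.φnorm_pos σ
    have h4 := cc.xi_pos
    have h5 := cc.eta_pos h
    simp only [hc, Lconst]
    positivity
  have hev : ∀ᶠ δ in nhdsWithin (0 : ℝ) (Set.Ioi 0), 0 < δ ∧ ∀ σ ∈ Γ, δ < c σ :=
    eventually_mem_nhdsWithin.and ((Filter.eventually_all_finset Γ).2 fun σ hσ =>
      Filter.mem_of_superset (Ioo_mem_nhdsGT (hcpos σ hσ)) fun _ hδ => hδ.2)
  obtain ⟨δ, hδ, hδc⟩ := hev.exists
  refine ⟨δ, hδ, fun α hα σ hσ => Finset.nonempty_iff_ne_empty.2 fun hemp => ?_⟩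
  have h1 := hμ.mul_integral_pullback_le hh hr (hΓ.1 σ hσ) α
  rw [hemp, Finset.coe_empty] at h1
  have h2 : ∫ x in cc.Jc σ, boundaryCost α r x ∂μ ≤ ∫ x, boundaryCost α r x ∂μ :=
    setIntegral_le_integral (integrable_boundaryCost _ hr)
      (Filter.Eventually.of_forall (boundaryCost_nonneg α r))
  exact absurd (h1.trans h2) (not_le.2 (hα.trans (hδc σ hσ)))

end CookieCutter

theorem unr_lower_bound (cc : CookieCutter) (Q : ℝ → ℝ)
    (hQ : ∀ t : ℝ, Filter.Tendsto
      (fun k : ℕ => (1 / (k : ℝ)) * Real.log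
        (∑ σ : Fin k → Fin cc.N, cc.φnorm (List.ofFn σ) ^ t))
      Filter.atTop (nhds (Q t)))
    (h : ℝ) (hh0 : 0 < h) (hQh : Q h = 0)
    (μ : MeasureTheory.Measure ℝ) (hμ : cc.IsGibbsLike μ h) (r : ℝ) (hr : 0 < r)
    (Γ : Finset (List (Fin cc.N))) (hΓ : cc.IsFMA Γ) :
    ∃ n₀ : ℕ, ∀ n : ℕ, n₀ ≤ n → ∃ nσ : List (Fin cc.N) → ℕ,
      (∀ σ ∈ Γ, 1 ≤ nσ σ) ∧ (∑ σ ∈ Γ, nσ σ) ≤ n ∧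
      (cc.Lconst h * cc.xi ^ r)⁻¹ *
          ∑ σ ∈ Γ, (μ (cc.Jc σ)).toReal * cc.φnorm σ ^ r * unr μ (nσ σ) r ≤
        unr μ n r := by
  have := hμ.1
  obtain ⟨δ, hδ, hne⟩ := hμ.exists_pos_forall_pullback_nonempty hh0 hr hΓ
  obtain ⟨n₀, hn₀⟩ := exists_forall_unr_lt (μ := μ) hr hδ
  refine ⟨n₀, fun n hn => ?_⟩
  set A : Set (Finset ℝ) := {α | α.card ≤ n ∧ ∫ x, boundaryCost α r x ∂μ < δ}
  set value : (Γ → ℕ) → ℝ := fun k => (cc.Lconst h * cc.xi ^ r)⁻¹ *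
    ∑ σ : Γ, (μ (cc.Jc σ)).toReal * cc.φnorm σ ^ r * unr μ (k σ) r
  set family : Finset ℝ → Γ → ℕ := fun α σ => (cc.pullback σ α).card
  have hfin : (family '' A).Finite := by
    refine (Set.finite_Icc (0 : Γ → ℕ) fun _ => n).subset ?_
    rintro _ ⟨α, hα, rfl⟩
    refine ⟨fun σ => Nat.zero_le _, fun σ => ?_⟩
    exact (Finset.single_le_sum (fun τ _ => Nat.zero_le (cc.pullback τ α).card) σ.2).trans
      ((hΓ.sum_card_pullback_le α).trans hα.1)
  obtain ⟨_, ⟨α, hα, rfl⟩, hmin⟩ := Set.exists_min_image _ value hfin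
    (Set.Nonempty.image _ (exists_integral_boundaryCost_lt (hn₀ n hn)))
  have hvalue : ∀ β, value (family β) ≤ ∫ x, boundaryCost β r x ∂μ := fun β => by
    refine le_trans ?_ (hμ.sum_mul_integral_pullback_le hh0 hr hΓ β)
    have hξ := cc.xi_pos
    have hη := cc.eta_pos h
    rw [← Finset.sum_coe_sort Γ]
    refine mul_le_mul_of_nonneg_left (Finset.sum_le_sum fun σ _ => ?_)
      (by rw [CookieCutter.Lconst]; positivity)
    exact mul_le_mul_of_nonneg_left (unr_le_integral_boundaryCost le_rfl)
      (mul_nonneg measureReal_nonneg (Real.rpow_nonneg (cc.φnorm_pos σ).le _))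
  refine ⟨fun σ => (cc.pullback σ α).card, fun σ hσ => (hne α hα.2 σ hσ).card_pos,
    (hΓ.sum_card_pullback_le α).trans hα.1, ?_⟩
  rw [← Finset.sum_coe_sort Γ]
  refine le_unr fun β hβ => ?_
  rcases lt_or_ge (∫ x, boundaryCost β r x ∂μ) δ with hlt | hge
  · exact (hmin _ ⟨β, ⟨hβ, hlt⟩, rfl⟩).trans (hvalue β)
  · exact (hvalue α).trans (hα.2.le.trans hge)
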